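/- Let F be a field of characteristic 2 and K = F(√a₁,…,√aₙ) with a₁,…,aₙ ∈ F*. Then W_q(K/F) = Σ_{i=1}^n ⟨1,aᵢ⟩_b ⊗ W_q(F). -/

import Mathlib

/-!  A concrete coefficient-matrix model of (possibly singular) finite-dimensional
quadratic forms over a field, suitable for characteristic 2. -/

/-- Coefficient representation of a (finite-dimensional) quadratic form over a field `F`:
the form of dimension `dim` given by `q(x) = ∑ i j, c i j * x i * x j`. -/
structure QF (F : Type*) [Field F] : Type _ where
  dim : ℕ
  c : Matrix (Fin dim) (Fin dim) F

namespace QF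

variable {F E : Type*} [Field F] [Field E]

/-- Evaluation of the quadratic form at a vector. -/
def eval (q : QF F) (x : Fin q.dim → F) : F :=
  ∑ i, ∑ j, q.c i j * x i * x j

/-- Scalar extension (base change) of a quadratic form along a ring homomorphism. -/
def map (f : F →+* E) (q : QF F) : QF E :=
  ⟨q.dim, fun i j => f (q.c i j)⟩

/-- Orthogonal sum. -/
def orthSum (q q' : QF F) : QF F :=
  ⟨q.dim + q'.dim,
    Matrix.reindex finSumFinEquiv finSumFinEquiv (Matrix.fromBlocks q.c 0 0 q'.c)⟩

/-- Scaling `a • q`. -/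
def smul (a : F) (q : QF F) : QF F := ⟨q.dim, a • q.c⟩

/-- The nonsingular binary quadratic form `[a,b] : (x,y) ↦ ax² + xy + by²`. -/
def bin (a b : F) : QF F := ⟨2, !![a, 1; 0, b]⟩

/-- The diagonal (totally singular) quadratic form `⟨a₁, …, aₙ⟩`. -/
def diag {n : ℕ} (v : Fin n → F) : QF F := ⟨n, Matrix.diagonal v⟩

/-- The zero-dimensional quadratic form. -/
def nil : QF F := { dim := 0, c := 0 }

/-- The one-dimensional form `⟨1⟩`. -/
def unit : QF F := diag (fun _ : Fin 1 => (1 : F))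

/-- Orthogonal sum of a list of forms. -/
def sumList (l : List (QF F)) : QF F := l.foldr orthSum nil

/-- `pfTensor [a₁,…,aₙ] q` is the tensor product `⟨⟨a₁,…,aₙ⟩⟩_b ⊗ q` of the bilinear
Pfister form `⟨⟨a₁,…,aₙ⟩⟩_b = ⟨1,a₁⟩_b ⊗ ⋯ ⊗ ⟨1,aₙ⟩_b` with the quadratic form `q`,
via `⟨1,a⟩_b ⊗ q ≅ q ⊥ a·q`. -/
def pfTensor (l : List F) (q : QF F) : QF F :=
  l.foldr (fun a r => orthSum r (smul a r)) q

/-- The hyperbolic plane `ℍ ≅ [0,0]`. -/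
def hypPlane : QF F := bin 0 0

/-- The orthogonal sum of `k` hyperbolic planes. -/
def hyp (k : ℕ) : QF F := sumList (List.replicate k hypPlane)

/-- The `l`-dimensional zero form `⟨0,…,0⟩`. -/
def zeros (l : ℕ) : QF F := diag (fun _ : Fin l => (0 : F))

/-- Isometry of quadratic forms. -/
def Isometric (q q' : QF F) : Prop :=
  ∃ e : (Fin q.dim → F) ≃ₗ[F] (Fin q'.dim → F), ∀ x, q'.eval (e x) = q.eval x

/-- Anisotropy: the form has no nontrivial zero. -/
def Anisotropic (q : QF F) : Prop := ∀ x, q.eval x = 0 → x = 0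

/-- A quadratic form is nonsingular if the radical of its polar form
`B_q(x,y) = q(x+y) - q(x) - q(y)` (with matrix `c + cᵀ`) is trivial. -/
def Nonsingular (q : QF F) : Prop := ∀ x, (q.c + q.c.transpose).mulVec x = 0 → x = 0

/-- A quadratic form is totally singular if its polar form vanishes identically. -/
def TotallySingular (q : QF F) : Prop := q.c + q.c.transpose = 0

/-- A quadratic form is hyperbolic if it is isometric to an orthogonal sum of
hyperbolic planes. -/
def Hyperbolic (q : QF F) : Prop := ∃ k, Isometric q (hyp k)

/-- Witt equivalence: `q ~ q'` iff the anisotropic parts agree, equivalently the two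
forms become isometric after adding suitable numbers of hyperbolic planes and zero
forms. -/
def WittEquiv (q q' : QF F) : Prop :=
  ∃ k k' l l', Isometric (orthSum q (orthSum (hyp k) (zeros l)))
    (orthSum q' (orthSum (hyp k') (zeros l')))

/-- `AnisoPartOf φ q` : `φ` is (isometric to) the anisotropic part of `q`, i.e. `φ` is
anisotropic and `q ≅ k × ℍ ⊥ φ ⊥ ⟨0,…,0⟩`. -/
def AnisoPartOf (φ q : QF F) : Prop :=
  Anisotropic φ ∧ ∃ k l, Isometric q (orthSum (hyp k) (orthSum φ (zeros l)))

/-- `Dominates q' q` means `q ≺ q'`, i.e. `q'` dominates `q`: there is an injective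
linear map `t` of the underlying spaces with `q' ∘ t = q`. -/
def Dominates (q' q : QF F) : Prop :=
  ∃ t : (Fin q.dim → F) →ₗ[F] (Fin q'.dim → F), Function.Injective t ∧
    ∀ x, q'.eval (t x) = q.eval x

/-- The affine quadric polynomial `∑ cᵢⱼ XᵢXⱼ` of a quadratic form. -/
noncomputable def toPoly (q : QF F) : MvPolynomial (Fin q.dim) F :=
  ∑ i, ∑ j, MvPolynomial.C (q.c i j) * (MvPolynomial.X i * MvPolynomial.X j)

/-- The affine coordinate ring of the (reduced) quadric `q = 0`. -/
abbrev CoordRing (q : QF F) : Type _ :=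
  MvPolynomial (Fin q.dim) F ⧸ (Ideal.span {q.toPoly}).radical

/-- The function field of the quadric `q = 0` (assuming the quadric is integral). -/
abbrev FunctionField (q : QF F) [IsDomain (CoordRing q)] : Type _ :=
  FractionRing (CoordRing q)

/-- The canonical ring homomorphism from a base field `F` into the function field of a
quadric defined over an extension field `K` of `F`. -/
noncomputable def toFunctionField {K : Type*} [Field K] [Algebra F K] (q : QF K)
    [IsDomain (CoordRing q)] : F →+* FunctionField q :=
  (algebraMap (CoordRing q) (FunctionField q)).comp
    ((algebraMap K (CoordRing q)).comp (algebraMap F K))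

end QF


namespace WK

open QuadraticMap

section generic

variable {F : Type*} [Field F]
variable {V W U : Type*} [AddCommGroup V] [Module F V] [AddCommGroup W] [Module F W]
  [AddCommGroup U] [Module F U]

/-- existence of a Lagrangian -/
def Lag (Q : QuadraticForm F V) : Prop :=
  ∃ L : Submodule F V, (∀ x ∈ L, Q x = 0) ∧ ∀ y, (∀ x ∈ L, polar Q x y = 0) → y ∈ L

/-- nonsingularity -/
def Nons (Q : QuadraticForm F V) : Prop := ∀ x, (∀ y, polar Q x y = 0) → x = 0

theorem polar_iso {Q : QuadraticForm F V} {Q' : QuadraticForm F W} (e : Q.IsometryEquiv Q')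
    (x y : V) : polar Q' (e x) (e y) = polar Q x y := by
  have : e x + e y = e (x + y) := (map_add e.toLinearEquiv x y).symm
  simp only [polar, this, e.map_app]

theorem Nons.congr {Q : QuadraticForm F V} {Q' : QuadraticForm F W} (h : Q.Equivalent Q')
    (hQ : Nons Q) : Nons Q' := by
  obtain ⟨e⟩ := h
  intro x hx
  have : e.symm x = 0 := by
    apply hQ
    intro y
    have := hx (e y)
    rw [← polar_iso e]
    simpa using this
  have h2 : e (e.symm x) = e 0 := by rw [this]
  rw [e.apply_symm_apply] at h2
  rw [h2]; exact map_zero e.toLinearEquiv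

theorem Lag.congr {Q : QuadraticForm F V} {Q' : QuadraticForm F W} (h : Q.Equivalent Q')
    (hQ : Lag Q) : Lag Q' := by
  obtain ⟨e⟩ := h
  obtain ⟨L, h1, h2⟩ := hQ
  refine ⟨L.comap (e.symm.toLinearEquiv : W →ₗ[F] V), ?_, ?_⟩
  · intro x hx
    have := h1 _ hx
    exact (e.symm.map_app x).symm.trans this
  · intro y hy
    apply h2
    intro x hx
    have := hy (e x) (by
      change e.symm (e x) ∈ L
      simpa using hx)
    rw [← polar_iso e]
    change polar Q' (e x) (e (e.symm y)) = 0
    simpa using this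

theorem Nons.prod {Q : QuadraticForm F V} {Q' : QuadraticForm F W} (hQ : Nons Q) (hQ' : Nons Q') :
    Nons (Q.prod Q') := by
  rintro ⟨x, x'⟩ hx
  have h1 : x = 0 := hQ x fun y => by simpa using hx (y, 0)
  have h2 : x' = 0 := hQ' x' fun y => by simpa using hx (0, y)
  rw [h1, h2]; rfl

theorem Nons.of_prod_right {Q : QuadraticForm F V} {Q' : QuadraticForm F W}
    (h : Nons (Q.prod Q')) : Nons Q' := by
  intro x hx
  have := h (0, x) (fun y => by simpa using hx y.2)
  exact congrArg Prod.snd this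

theorem Lag.prod {Q : QuadraticForm F V} {Q' : QuadraticForm F W} (hQ : Lag Q) (hQ' : Lag Q') :
    Lag (Q.prod Q') := by
  obtain ⟨L, h1, h2⟩ := hQ
  obtain ⟨L', h1', h2'⟩ := hQ'
  refine ⟨L.prod L', ?_, ?_⟩
  · rintro ⟨x, x'⟩ ⟨hx, hx'⟩
    simp [h1 x hx, h1' x' hx']
  · rintro ⟨y, y'⟩ hy
    refine ⟨h2 _ fun x hx => ?_, h2' _ fun x hx => ?_⟩
    · simpa using hy (x, 0) ⟨hx, L'.zero_mem⟩
    · simpa using hy (0, x) ⟨L.zero_mem, hx⟩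

theorem Lag.zero : Lag (0 : QuadraticForm F V) :=
  ⟨⊤, fun _ _ => rfl, fun _ _ => trivial⟩

theorem Lag.of_prod_zero {Q : QuadraticForm F V}
    (h : Lag (Q.prod (0 : QuadraticForm F W))) : Lag Q := by
  obtain ⟨L, h1, h2⟩ := h
  refine ⟨L.map (LinearMap.fst F V W), ?_, ?_⟩
  · rintro _ ⟨⟨x, x'⟩, hx, rfl⟩
    simpa using h1 _ hx
  · intro y hy
    refine ⟨(y, 0), h2 _ ?_, rfl⟩
    rintro ⟨x, x'⟩ hx
    rw [polar_prod, polar_zero_right, add_zero]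
    exact hy x ⟨_, hx, rfl⟩

theorem polarBilin_refl (Q : QuadraticForm F V) : LinearMap.BilinForm.IsRefl Q.polarBilin := by
  intro x y h
  have : polar Q x y = 0 := h
  rw [polar_comm] at this
  exact this

theorem Nons.nondeg {Q : QuadraticForm F V} (h : Nons Q) :
    LinearMap.BilinForm.Nondegenerate Q.polarBilin := by
  constructor
  · exact h
  · intro x hx
    apply h
    intro y
    rw [polar_comm]; exact hx y

theorem Lag.cancel [FiniteDimensional F V] [FiniteDimensional F W]
    {Q : QuadraticForm F V} {H : QuadraticForm F W}
    (hQ : Nons Q) (hH : Nons H) (h : Lag (Q.prod H)) (h' : Lag H) : Lag Q := by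
  obtain ⟨L, h1, h2⟩ := h
  obtain ⟨M, h1', h2'⟩ := h'
  have hpL : ∀ x ∈ L, ∀ y ∈ L, polar (Q.prod H) x y = 0 := by
    intro x hx y hy
    simp only [polar, h1 _ (L.add_mem hx hy), h1 _ hx, h1 _ hy]; simp
  have hpM : ∀ x ∈ M, ∀ y ∈ M, polar H x y = 0 := by
    intro x hx y hy
    simp only [polar, h1' _ (M.add_mem hx hy), h1' _ hx, h1' _ hy]; simp
  refine ⟨(L ⊓ (⊤ : Submodule F V).prod M).map (LinearMap.fst F V W), ?_, ?_⟩
  · rintro _ ⟨⟨x, m⟩, ⟨hx, hm⟩, rfl⟩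
    have := h1 _ hx
    simpa [h1' m hm.2] using this
  · intro y hy
    have key := LinearMap.BilinForm.orthogonal_orthogonal (hQ.prod hH).nondeg
      (polarBilin_refl _) (L ⊔ (⊥ : Submodule F V).prod M)
    have hmem : (y, (0 : W)) ∈ L ⊔ (⊥ : Submodule F V).prod M := by
      rw [← key]
      rw [LinearMap.BilinForm.mem_orthogonal_iff]
      rintro ⟨u, w⟩ hu
      rw [LinearMap.BilinForm.mem_orthogonal_iff] at hu
      have hL : (u, w) ∈ L := h2 _ fun x hx => hu x (Submodule.mem_sup_left hx)
      have hM : w ∈ M := h2' _ fun x hx => by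
        have := hu (0, x) (Submodule.mem_sup_right ⟨rfl, hx⟩)
        have : polar (Q.prod H) (0, x) (u, w) = 0 := this
        simpa using this
      have := hy u ⟨(u, w), ⟨hL, trivial, hM⟩, rfl⟩
      change polar (Q.prod H) (u, w) (y, 0) = 0
      simpa using this
    obtain ⟨⟨l, l'⟩, hl, ⟨z, m⟩, ⟨hz, hm⟩, he⟩ := Submodule.mem_sup.1 hmem
    have hz : z = 0 := hz
    subst hz
    simp only [Prod.mk_add_mk, Prod.mk.injEq, add_zero] at he
    obtain ⟨rfl, he⟩ := he
    have : l' = -m := eq_neg_of_add_eq_zero_left he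
    exact ⟨(l, l'), ⟨hl, trivial, by rw [this]; exact M.neg_mem hm⟩, rfl⟩

theorem Lag.double [CharP F 2] {Q : QuadraticForm F V} (hQ : Nons Q) : Lag (Q.prod Q) := by
  refine ⟨LinearMap.range (LinearMap.prod LinearMap.id LinearMap.id : V →ₗ[F] V × V), ?_, ?_⟩
  · rintro _ ⟨x, rfl⟩
    simp [CharTwo.add_self_eq_zero]
  · rintro ⟨y, z⟩ h
    have : y - z = 0 := by
      apply hQ
      intro x
      have := h (x, x) ⟨x, rfl⟩
      rw [polar_prod] at this
      rw [polar_comm, polar_sub_right, CharTwo.sub_eq_add]; exact this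
    rw [sub_eq_zero] at this
    exact ⟨y, by simp [this]⟩

theorem Equivalent.prodAssoc (A : QuadraticForm F V) (B : QuadraticForm F W)
    (C : QuadraticForm F U) : ((A.prod B).prod C).Equivalent (A.prod (B.prod C)) :=
  ⟨⟨LinearEquiv.prodAssoc F V W U, by rintro ⟨⟨a, b⟩, c⟩; simp [add_assoc]⟩⟩

/-- the binary form `[c,d]` -/
def binQ (p : F × F) : QuadraticForm F (F × F) :=
  (p.1 • QuadraticMap.sq (R := F)).comp (LinearMap.fst F F F)
  + QuadraticMap.linMulLin (LinearMap.fst F F F) (LinearMap.snd F F F)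
  + (p.2 • QuadraticMap.sq (R := F)).comp (LinearMap.snd F F F)

theorem binQ_apply (p v : F × F) :
    binQ p v = p.1 * v.1 ^ 2 + v.1 * v.2 + p.2 * v.2 ^ 2 := by
  simp [binQ]; ring

theorem binQ_polar [CharP F 2] (p v w : F × F) :
    polar (binQ p) v w = v.1 * w.2 + v.2 * w.1 := by
  simp only [polar, binQ_apply, Prod.fst_add, Prod.snd_add]
  have h : (2 : F) = 0 := CharTwo.two_eq_zero
  linear_combination (p.1 * v.1 * w.1 + p.2 * v.2 * w.2) * h

/-- splitting off a plane -/
theorem split [CharP F 2] {Q : QuadraticForm F V} (x y : V) (hxy : polar Q x y = 1) :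
    ∃ S : Submodule F V, ∃ Q' : QuadraticForm F S,
      Q.Equivalent ((binQ (Q x, Q y)).prod Q') := by
  have hxx : ∀ z, polar Q z z = 0 := fun z => by
    rw [polar_self, two_nsmul, CharTwo.add_self_eq_zero]
  have hyx : polar Q y x = 1 := by rw [polar_comm]; exact hxy
  let S : Submodule F V := LinearMap.ker (Q.polarBilin x) ⊓ LinearMap.ker (Q.polarBilin y)
  have hS : ∀ w : S, polar Q x w = 0 ∧ polar Q y w = 0 := fun w => w.2
  let f : (F × F) × S →ₗ[F] V :=
    LinearMap.coprod (LinearMap.coprod (LinearMap.toSpanSingleton F V x)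
      (LinearMap.toSpanSingleton F V y)) S.subtype
  have hf : ∀ u, f u = u.1.1 • x + u.1.2 • y + (u.2 : V) := fun u => by simp [f]
  have hpx : ∀ u, polar Q x (f u) = u.1.2 := fun u => by
    rw [hf]; simp [polar_add_right, polar_smul_right, hxx, hxy, (hS u.2).1]
  have hpy : ∀ u, polar Q y (f u) = u.1.1 := fun u => by
    rw [hf]; simp [polar_add_right, polar_smul_right, hxx, hyx, (hS u.2).2]
  have hinj : Function.Injective f := by
    intro u v huv
    have e1 : u.1.2 = v.1.2 := by rw [← hpx, huv, hpx]
    have e2 : u.1.1 = v.1.1 := by rw [← hpy, huv, hpy]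
    rw [hf, hf, e1, e2] at huv
    have e3 : u.2 = v.2 := Subtype.ext (add_left_cancel huv)
    exact Prod.ext (Prod.ext e2 e1) e3
  have hsurj : Function.Surjective f := by
    intro v
    let w := v - polar Q y v • x - polar Q x v • y
    have hw : w ∈ S := by
      constructor
      · change polar Q x w = 0
        simp [w, polar_sub_right, polar_smul_right, hxx, hxy]
      · change polar Q y w = 0
        simp [w, polar_sub_right, polar_smul_right, hxx, hyx]
    refine ⟨((polar Q y v, polar Q x v), ⟨w, hw⟩), ?_⟩
    rw [hf]; simp [w]
  refine ⟨S, Q.comp S.subtype, ?_⟩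
  refine QuadraticMap.Equivalent.symm ⟨⟨LinearEquiv.ofBijective f ⟨hinj, hsurj⟩, ?_⟩⟩
  intro u
  change Q (f u) = _
  have hadd : ∀ a b : V, Q (a + b) = Q a + Q b + polar Q a b := fun a b => by
    simp [polar]
  rw [hf, hadd, hadd]
  simp [polar_add_left, polar_smul_left, polar_smul_right, hxy, (hS u.2).1, (hS u.2).2, binQ_apply,
    QuadraticMap.map_smul]
  ring

end generic

end WK


namespace WK

open QuadraticMap

section model

variable {F : Type*} [Field F]
variable {ι κ : Type*} [Fintype ι] [Fintype κ]

/-- orthogonal sum of binary forms -/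
def Qp (p : ι → F × F) : QuadraticForm F (ι → F × F) :=
  QuadraticMap.pi (fun i => binQ (p i))

theorem Qp_apply (p v : ι → F × F) :
    Qp p v = ∑ i, ((p i).1 * (v i).1 ^ 2 + (v i).1 * (v i).2 + (p i).2 * (v i).2 ^ 2) := by
  simp [Qp, binQ_apply]

theorem Qp_polar [CharP F 2] (p v w : ι → F × F) :
    polar (Qp p) v w = ∑ i, ((v i).1 * (w i).2 + (v i).2 * (w i).1) := by
  simp [Qp, binQ_polar]

theorem Qp_nons [CharP F 2] (p : ι → F × F) : Nons (Qp p) := by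
  classical
  intro x hx
  funext i
  have h1 := hx (Pi.single i (0, 1))
  have h2 := hx (Pi.single i (1, 0))
  rw [Qp_polar, Finset.sum_eq_single i] at h1 h2
  · simp at h1 h2
    exact Prod.ext h1 h2
  all_goals simp +contextual

theorem Qp_reindex (e : ι ≃ κ) (p : ι → F × F) (q : κ → F × F) (h : ∀ i, q (e i) = p i) :
    (Qp p).Equivalent (Qp q) := by
  refine QuadraticMap.Equivalent.symm ⟨⟨LinearEquiv.funCongrLeft F (F × F) e, ?_⟩⟩
  intro v
  change Qp p (fun i => v (e i)) = Qp q v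
  rw [Qp_apply, Qp_apply, ← e.sum_comp]
  simp [h]

theorem Qp_sum (p : ι → F × F) (q : κ → F × F) :
    (Qp (Sum.elim p q)).Equivalent ((Qp p).prod (Qp q)) := by
  refine ⟨⟨LinearEquiv.sumArrowLequivProdArrow ι κ F (F × F), ?_⟩⟩
  intro v
  change Qp p (fun i => v (Sum.inl i)) + Qp q (fun i => v (Sum.inr i)) = Qp (Sum.elim p q) v
  simp [Qp_apply]

theorem exists_equiv {X : Type*} (p : ι → X) (q : κ → X)
    (h : Finset.univ.val.map p = Finset.univ.val.map q) : ∃ e : ι ≃ κ, ∀ i, q (e i) = p i := by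
  classical
  have hc : ∀ x, Nonempty ({i // p i = x} ≃ {i // q i = x}) := by
    intro x
    rw [← Fintype.card_eq]
    have := congrArg (Multiset.count x) h
    rw [Multiset.count_map, Multiset.count_map] at this
    rw [Fintype.card_subtype, Fintype.card_subtype]
    simpa [Finset.card, Finset.filter_val, eq_comm] using this
  let f := fun x => Classical.choice (hc x)
  refine ⟨(Equiv.sigmaFiberEquiv p).symm.trans ((Equiv.sigmaCongrRight f).trans
    (Equiv.sigmaFiberEquiv q)), ?_⟩
  intro i
  exact (f (p i) ⟨i, rfl⟩).2

/-- the form attached to a multiset of pairs -/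
noncomputable def QM (s : Multiset (F × F)) :
    QuadraticForm F (Fin s.toList.length → F × F) :=
  Qp (fun i => s.toList.get i)

theorem map_get_toList {X : Type*} (s : Multiset X) :
    Finset.univ.val.map (fun i => s.toList.get i) = s := by
  have : (Finset.univ.val.map (fun i => s.toList.get i)) = ((List.ofFn s.toList.get : List X) : Multiset X) := by
    simp [Fin.univ_val_map]
  rw [this, List.ofFn_get, Multiset.coe_toList]

theorem QM_of (p : ι → F × F) (s : Multiset (F × F)) (h : Finset.univ.val.map p = s) :
    (Qp p).Equivalent (QM s) := by
  obtain ⟨e, he⟩ := exists_equiv p (fun i => s.toList.get i) (h.trans (map_get_toList s).symm)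
  exact Qp_reindex e _ _ he

theorem map_sum_elim {X : Type*} (p : ι → X) (q : κ → X) :
    Finset.univ.val.map (Sum.elim p q) = Finset.univ.val.map p + Finset.univ.val.map q := by
  rw [← Finset.univ_disjSum_univ]
  simp [Finset.disjSum, Multiset.disjSum]

theorem QM_add (s t : Multiset (F × F)) : (QM (s + t)).Equivalent ((QM s).prod (QM t)) := by
  refine QuadraticMap.Equivalent.trans (QuadraticMap.Equivalent.symm (QM_of _ _ ?_)) (Qp_sum _ _)
  rw [map_sum_elim, map_get_toList, map_get_toList]

theorem QM_nons [CharP F 2] (s : Multiset (F × F)) : Nons (QM s) := Qp_nons _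

theorem QM_singleton (p : F × F) : (binQ p).Equivalent (QM {p}) := by
  refine QuadraticMap.Equivalent.trans ?_ (QM_of (fun _ : Unit => p) _ (by simp))
  refine QuadraticMap.Equivalent.symm ⟨⟨LinearEquiv.funUnique Unit F (F × F), ?_⟩⟩
  intro v
  simp [Qp_apply, binQ_apply]

theorem QM_zero_of_subsingleton {V : Type*} [AddCommGroup V] [Module F V] [Subsingleton V]
    (Q : QuadraticForm F V) : Q.Equivalent (QM 0) := by
  refine QuadraticMap.Equivalent.trans ?_ (QM_of (fun i : Empty => i.elim) _ (by simp))
  refine ⟨⟨LinearEquiv.ofSubsingleton _ _, ?_⟩⟩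
  intro v
  rw [Subsingleton.elim v 0]
  simp

theorem exists_QM [CharP F 2] (n : ℕ) : ∀ {V : Type*} [AddCommGroup V] [Module F V]
    [FiniteDimensional F V] (Q : QuadraticForm F V) (_ : Nons Q) (_ : Module.finrank F V = n),
    (∃ s, Q.Equivalent (QM s)) ∧
      (Lag Q → ∃ k, Q.Equivalent (QM (Multiset.replicate k ((0 : F), (0 : F))))) := by
  induction n using Nat.strong_induction_on with
  | _ n ih =>
  intro V _ _ _ Q hQ hn
  rcases subsingleton_or_nontrivial V with hV | hV
  · exact ⟨⟨0, QM_zero_of_subsingleton Q⟩, fun _ => ⟨0, QM_zero_of_subsingleton Q⟩⟩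
  have step : ∀ x y : V, polar Q x y = 1 → ∃ s : Multiset (F × F),
      Q.Equivalent (QM ((Q x, Q y) ::ₘ s)) ∧ (Lag Q → Lag (binQ (Q x, Q y)) → 
        ∃ k, Q.Equivalent (QM ((Q x, Q y) ::ₘ Multiset.replicate k ((0 : F), (0 : F))))) := by
    intro x y hxy
    obtain ⟨S, Q', hQ'⟩ := split x y hxy
    have hN : Nons Q' := (hQ.congr hQ').of_prod_right
    have hlt : Module.finrank F S < n := by
      obtain ⟨e⟩ := hQ'
      have := e.toLinearEquiv.finrank_eq
      rw [Module.finrank_prod, Module.finrank_prod, Module.finrank_self] at this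
      omega
    obtain ⟨⟨s, hs⟩, h2⟩ := ih _ hlt Q' hN rfl
    have cons : ∀ (p : F × F) t, Q'.Equivalent (QM t) →
        ((binQ p).prod Q').Equivalent (QM (p ::ₘ t)) := fun p t ht =>
      ((QM_singleton p).prod ht).trans (QuadraticMap.Equivalent.symm (QM_add {p} t))
    refine ⟨s, hQ'.trans (cons _ _ hs), fun hl hb => ?_⟩
    have hl' : Lag Q' := by
      have h3 := hl.congr hQ'
      have hbn : Nons (binQ (Q x, Q y)) :=
        (QM_nons _).congr (QuadraticMap.Equivalent.symm (QM_singleton _))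
      exact Lag.cancel hN hbn (h3.congr ⟨IsometryEquiv.prodComm _ _⟩) hb
    obtain ⟨k, hk⟩ := h2 hl'
    exact ⟨k, hQ'.trans (cons _ _ hk)⟩
  have ex : ∀ x : V, x ≠ 0 → ∃ y, polar Q x y = 1 := by
    intro x hx
    have : ∃ y, polar Q x y ≠ 0 := by
      by_contra! h
      exact hx (hQ x h)
    obtain ⟨y, hy⟩ := this
    exact ⟨(polar Q x y)⁻¹ • y, by simp [polar_smul_right, hy]⟩
  constructor
  · obtain ⟨x, hx⟩ := exists_ne (0 : V)
    obtain ⟨y, hy⟩ := ex x hx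
    obtain ⟨s, hs, -⟩ := step x y hy
    exact ⟨_, hs⟩
  · intro hl
    obtain ⟨L, h1, h2⟩ := id hl
    have : ∃ x ∈ L, x ≠ 0 := by
      by_contra! h
      obtain ⟨x, hx⟩ := exists_ne (0 : V)
      exact hx (h x (h2 x fun y hy => by rw [h y hy, polar_zero_left]))
    obtain ⟨x, hxL, hx⟩ := this
    obtain ⟨y, hy⟩ := ex x hx
    have hx0 := h1 x hxL
    have hp : polar Q x (y + Q y • x) = 1 := by
      rw [polar_add_right, polar_smul_right, polar_self, hy, hx0]; simp
    have hq : Q (y + Q y • x) = 0 := by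
      have : Q (y + Q y • x) = Q y + Q (Q y • x) + polar Q y (Q y • x) := by simp [polar]
      rw [this, polar_smul_right, polar_comm, hy, QuadraticMap.map_smul, hx0]
      simp [CharTwo.add_self_eq_zero]
    obtain ⟨s, -, h3⟩ := step x _ hp
    rw [hq, hx0] at h3
    obtain ⟨k, hk⟩ := h3 hl (by
      refine ⟨LinearMap.ker (LinearMap.snd F F F), ?_, ?_⟩
      · rintro ⟨a, b⟩ h
        have : b = 0 := h
        simp [binQ_apply]
        exact Or.inr this
      · rintro ⟨a, b⟩ h
        have := h (1, 0) rfl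
        rw [binQ_polar] at this
        simpa using this)
    exact ⟨k + 1, by rw [Multiset.replicate_succ]; exact hk⟩

theorem lag_of_Z [CharP F 2] (c d : ι → F) (Z : ι → ι → F) (hZ : ∀ i j, Z i j = Z j i)
    (h : ∀ i, c i = Z i i + ∑ j, d j * Z i j ^ 2) : Lag (Qp fun i => (c i, d i)) := by
  classical
  let f : (ι → F) →ₗ[F] (ι → F × F) :=
    { toFun := fun a i => (a i, ∑ j, Z i j * a j)
      map_add' := fun a b => by
        funext i; simp [mul_add, Finset.sum_add_distrib]
      map_smul' := fun t a => by
        funext i; simp [Finset.mul_sum]; congr 1; funext j; ring }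
  have hf : ∀ a i, f a i = (a i, ∑ j, Z i j * a j) := fun a i => rfl
  refine ⟨LinearMap.range f, ?_, ?_⟩
  · rintro _ ⟨a, rfl⟩
    -- the quadratic form vanishes on basis vectors and is additive on the range
    have hpol : ∀ a b, polar (Qp fun i => (c i, d i)) (f a) (f b) = 0 := by
      intro a b
      rw [Qp_polar]
      simp only [hf, Finset.sum_add_distrib, Finset.mul_sum, Finset.sum_mul]
      rw [Finset.sum_comm (γ := ι)]
      rw [← CharTwo.sub_eq_add, sub_eq_zero]
      refine Finset.sum_congr rfl fun i _ => Finset.sum_congr rfl fun j _ => ?_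
      rw [hZ]; ring
    have hadd : ∀ a b, Qp (fun i => (c i, d i)) (f (a + b)) =
        Qp (fun i => (c i, d i)) (f a) + Qp (fun i => (c i, d i)) (f b) := by
      intro a b
      have := hpol a b
      rw [map_add]
      simp only [polar] at this
      linear_combination this
    have hb : ∀ i t, Qp (fun i => (c i, d i)) (f (Pi.single i t)) = 0 := by
      intro i t
      have : (Pi.single i t : ι → F) = t • Pi.single i 1 := by
        rw [← Pi.single_smul]; simp
      rw [this, map_smul, QuadraticMap.map_smul, Qp_apply]
      have : ∀ k, f (Pi.single i 1) k = ((Pi.single i 1 : ι → F) k, Z k i) := by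
        intro k; simp [hf, Pi.single_apply]
      simp only [this, Finset.sum_add_distrib]
      rw [Finset.sum_eq_single i (by simp +contextual) (by simp),
        Finset.sum_eq_single i (by simp +contextual) (by simp)]
      simp only [Pi.single_eq_same]
      rw [h i]
      simp only [hZ _ i]
      have h2 : (2 : F) = 0 := CharTwo.two_eq_zero
      simp only [smul_eq_mul]
      linear_combination (t * t * (Z i i + ∑ j, d j * Z i j ^ 2)) * h2
    rw [← Finset.univ_sum_single a]
    induction (Finset.univ : Finset ι) using Finset.induction_on with
    | empty => simp
    | insert i s hi ih => rw [Finset.sum_insert hi, hadd, ih, hb, add_zero]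
  · intro y hy
    refine ⟨fun i => (y i).1, ?_⟩
    funext i
    rw [hf]
    refine Prod.ext rfl ?_
    have := hy _ ⟨Pi.single i 1, rfl⟩
    rw [Qp_polar] at this
    simp only [hf, Finset.sum_add_distrib] at this
    rw [Finset.sum_eq_single i (by simp +contextual) (by simp)] at this
    simp [Pi.single_apply] at this
    rw [CharTwo.add_eq_zero] at this
    rw [this]
    simp only [hZ _ i]

/-- swap the marked coordinates -/
def swp (σ : ι → Bool) (i : ι) (p : F × F) : F × F := if σ i then p.swap else p

theorem exists_Z [CharP F 2] (p : ι → F × F) (h : Lag (Qp p)) :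
    ∃ (p' : ι → F × F) (Z : ι → ι → F) (σ : ι → Bool), (∀ i, p' i = swp σ i (p i)) ∧
      (∀ i j, Z i j = Z j i) ∧ ∀ i, (p' i).1 = Z i i + ∑ j, (p' j).2 * Z i j ^ 2 := by
  classical
  obtain ⟨L, h1, h2⟩ := h
  -- coordinate Lagrangians
  let Λ : (ι → Bool) → Submodule F (ι → F × F) := fun σ =>
    { carrier := {v | ∀ i, (swp σ i (v i)).1 = 0}
      add_mem' := by
        intro a b ha hb i
        have := ha i; have := hb i
        simp only [swp] at *
        split_ifs at * <;> simp_all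
      zero_mem' := by intro i; simp only [swp]; split_ifs <;> simp
      smul_mem' := by
        intro t a ha i
        have := ha i
        simp only [swp] at *
        split_ifs at * <;> simp_all }
  have hΛ : ∀ σ v, v ∈ Λ σ ↔ ∀ i, (swp σ i (v i)).1 = 0 := fun σ v => Iff.rfl
  have hpolL : ∀ x ∈ L, ∀ y ∈ L, polar (Qp p) x y = 0 := by
    intro x hx y hy
    simp only [polar, h1 _ (L.add_mem hx hy), h1 _ hx, h1 _ hy]; simp
  have hσ : ∃ σ, L ⊓ Λ σ = ⊥ := by
    obtain ⟨m, ⟨σ, rfl⟩, hmin⟩ := WellFounded.has_min (wellFounded_lt (α := Submodule F (ι → F × F)))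
      (Set.range fun σ => L ⊓ Λ σ) ⟨_, fun _ => true, rfl⟩
    refine ⟨σ, ?_⟩
    by_contra hne
    obtain ⟨w, ⟨hwL, hwΛ⟩, hw0⟩ := Submodule.exists_mem_ne_zero_of_ne_bot hne
    obtain ⟨i, hi⟩ := Function.ne_iff.1 hw0
    let σ' := Function.update σ i (!σ i)
    apply hmin (L ⊓ Λ σ') ⟨σ', rfl⟩
    have hi2 : (swp σ i (w i)).2 ≠ 0 := by
      intro h0
      apply hi
      have := hwΛ i
      simp only [swp] at this h0
      split_ifs at this h0 <;> exact Prod.ext (by assumption) (by assumption)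
    have hswp : ∀ v : F × F, swp σ' i v = (swp σ i v).swap := by
      intro v
      cases hh : σ i <;> simp [swp, σ', hh]
    have hswp' : ∀ j, j ≠ i → ∀ v : F × F, swp σ' j v = swp σ j v := by
      intro j hj v
      simp [swp, σ', Function.update_of_ne hj]
    refine lt_of_le_of_ne ?_ ?_
    · rintro u ⟨huL, huΛ⟩
      refine ⟨huL, ?_⟩
      have hp := hpolL u huL w hwL
      rw [Qp_polar, Finset.sum_eq_single i] at hp
      · intro j
        by_cases hj : j = i
        · subst hj
          have a1 := hwΛ j
          have a2 := huΛ j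
          rw [hswp] at a2
          revert a1 a2 hi2 hp
          simp only [swp]
          split_ifs <;> simp <;> intros <;> simp_all
        · have := huΛ j
          rwa [hswp' j hj] at this
      · intro j _ hj
        have a1 := hwΛ j
        have a2 := huΛ j
        rw [hswp' j hj] at a2
        simp only [swp] at a1 a2
        split_ifs at a1 a2 <;> simp_all
      · simp
    · intro heq
      have : w ∈ L ⊓ Λ σ' := by rw [heq]; exact ⟨hwL, hwΛ⟩
      have := this.2 i
      rw [hswp] at this
      exact hi2 this
  obtain ⟨σ, hσ⟩ := hσ
  let π : (ι → F × F) →ₗ[F] (ι → F) :=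
    { toFun := fun v i => (swp σ i (v i)).1
      map_add' := by
        intro a b; funext i; simp only [swp, Pi.add_apply]; split_ifs <;> simp
      map_smul' := by
        intro a b; funext i; simp only [swp, Pi.smul_apply]; split_ifs <;> simp }
  have hpol' : ∀ v w, polar (Qp p) v w =
      ∑ i, ((swp σ i (v i)).1 * (swp σ i (w i)).2 + (swp σ i (v i)).2 * (swp σ i (w i)).1) := by
    intro v w
    rw [Qp_polar]
    refine Finset.sum_congr rfl fun i _ => ?_
    simp only [swp]; split_ifs
    · simp; ring
    · rfl
  have hQ' : ∀ v, Qp p v = ∑ i, ((swp σ i (p i)).1 * (swp σ i (v i)).1 ^ 2 +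
      (swp σ i (v i)).1 * (swp σ i (v i)).2 + (swp σ i (p i)).2 * (swp σ i (v i)).2 ^ 2) := by
    intro v
    rw [Qp_apply]
    refine Finset.sum_congr rfl fun i _ => ?_
    simp only [swp]; split_ifs
    · simp; ring
    · rfl
  have hsw : ∀ i (v : F × F), swp σ i (swp σ i v) = v := by
    intro i v; simp only [swp]; split_ifs <;> simp
  have hsurj : L.map π = ⊤ := by
    by_contra hne
    obtain ⟨φ, hφ0, hφ⟩ := Submodule.exists_le_ker_of_lt_top _ (lt_top_iff_ne_top.2 hne)
    apply hφ0
    let g : ι → F := fun i => φ (Pi.single i 1)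
    have hg : ∀ a, φ a = ∑ i, a i * g i := by
      intro a
      conv_lhs => rw [← Finset.univ_sum_single a]
      rw [map_sum]
      refine Finset.sum_congr rfl fun i _ => ?_
      have : (Pi.single i (a i) : ι → F) = a i • Pi.single i 1 := by
        rw [← Pi.single_smul]; simp
      rw [this, map_smul, smul_eq_mul]
    let y : ι → F × F := fun i => swp σ i (0, g i)
    have hyL : y ∈ L := by
      apply h2
      intro x hx
      have : φ (π x) = 0 := hφ ⟨x, hx, rfl⟩
      rw [hg] at this
      rw [hpol']
      simp only [y, hsw, mul_zero, add_zero]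
      exact this
    have hy0 : y ∈ L ⊓ Λ σ := ⟨hyL, fun i => by simp only [y, hsw]⟩
    rw [hσ] at hy0
    have hy0 : y = 0 := hy0
    refine LinearMap.ext fun a => ?_
    rw [hg]
    apply Finset.sum_eq_zero
    intro i _
    have := congrArg (swp σ i) (congrFun hy0 i)
    simp only [y, hsw] at this
    have : g i = 0 := by
      have := congrArg Prod.snd this
      simp only [swp] at this
      split_ifs at this <;> simpa using this
    rw [this, mul_zero]
  have hv : ∀ i, ∃ v ∈ L, π v = Pi.single i 1 := by
    intro i
    have : (Pi.single i 1 : ι → F) ∈ L.map π := by rw [hsurj]; trivial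
    exact this
  choose v hvL hv using hv
  have hv1 : ∀ i j, (swp σ j (v i j)).1 = (Pi.single i 1 : ι → F) j := fun i j => congrFun (hv i) j
  refine ⟨fun i => swp σ i (p i), fun i j => (swp σ j (v i j)).2, σ, fun _ => rfl, ?_, ?_⟩
  · intro i j
    have := hpolL _ (hvL i) _ (hvL j)
    rw [hpol'] at this
    simp only [hv1, Finset.sum_add_distrib] at this
    simp [Pi.single_apply] at this
    rw [CharTwo.add_eq_zero] at this
    exact this.symm
  · intro i
    have := h1 _ (hvL i)
    rw [hQ'] at this
    simp only [hv1, Finset.sum_add_distrib] at this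
    simp [Pi.single_apply] at this
    rw [add_assoc, CharTwo.add_eq_zero] at this
    exact this

end model

end WK


namespace WK

open QuadraticMap

section alg

variable {F : Type*} [Field F] [CharP F 2]

/-- multiset is hyperbolic -/
def N (s : Multiset (F × F)) : Prop := Lag (QM s)

theorem N.add {s t : Multiset (F × F)} (hs : N s) (ht : N t) : N (s + t) :=
  (Lag.prod hs ht).congr (QuadraticMap.Equivalent.symm (QM_add s t))

theorem N.double (s : Multiset (F × F)) : N (s + s) :=
  (Lag.double (QM_nons s)).congr (QuadraticMap.Equivalent.symm (QM_add s s))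

theorem N.cancel {s t : Multiset (F × F)} (h : N (s + t)) (ht : N t) : N s :=
  Lag.cancel (QM_nons s) (QM_nons t) (Lag.congr (QM_add s t) h) ht

theorem N.zero : N (0 : Multiset (F × F)) := N.cancel (s := 0) (t := 0) (N.double 0) <| by
  have : Lag (0 : QuadraticForm F PUnit) := Lag.zero
  exact this.congr (QM_zero_of_subsingleton _)

theorem N.of_Z {ι : Type*} [Fintype ι] {s : Multiset (F × F)} (c d : ι → F) (Z : ι → ι → F)
    (hs : Finset.univ.val.map (fun i => (c i, d i)) = s) (hZ : ∀ i j, Z i j = Z j i)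
    (h : ∀ i, c i = Z i i + ∑ j, d j * Z i j ^ 2) : N s :=
  (lag_of_Z c d Z hZ h).congr (QM_of _ _ hs)

/-- scaling of a pair -/
def act (a : F) (p : F × F) : F × F := (a * p.1, p.2 / a)

variable {n : ℕ} (a : Fin n → F)

/-- the sum of the forms `⟨1,aᵢ⟩ ⊗ τᵢ` -/
def T (τ : Fin n → Multiset (F × F)) : Multiset (F × F) :=
  ∑ i, (τ i + (τ i).map (act (a i)))

theorem T_add (τ τ' : Fin n → Multiset (F × F)) : T a (τ + τ') = T a τ + T a τ' := by
  simp only [T, Pi.add_apply, Multiset.map_add, ← Finset.sum_add_distrib]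
  refine Finset.sum_congr rfl fun i _ => ?_
  abel

/-- membership in the subgroup -/
def G (s : Multiset (F × F)) : Prop := ∃ τ, N (s + T a τ)

theorem G.of_N {s : Multiset (F × F)} (h : N s) : G a s :=
  ⟨0, by simpa [T] using h⟩

theorem G.add {s t : Multiset (F × F)} (hs : G a s) (ht : G a t) : G a (s + t) := by
  obtain ⟨τ, hτ⟩ := hs
  obtain ⟨τ', hτ'⟩ := ht
  refine ⟨τ + τ', ?_⟩
  rw [T_add, add_add_add_comm]
  exact hτ.add hτ'

theorem G.cancel_double {s t : Multiset (F × F)} (h : G a (s + (t + t))) : G a s := by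
  obtain ⟨τ, hτ⟩ := h
  refine ⟨τ, N.cancel (t := t + t) ?_ (N.double t)⟩
  rwa [add_right_comm]

/-- the congruence -/
def con : AddCon (Multiset (F × F)) where
  r s t := G a (s + t)
  iseqv :=
    { refl := fun s => G.of_N a (N.double s)
      symm := fun {s t} h => by rwa [add_comm]
      trans := fun {s t u} h h' => by
        apply G.cancel_double a (t := t)
        have := h.add a h'
        convert this using 1
        abel }
  add' := fun {s t s' t'} h h' => by
    have := G.add a h h'
    rwa [add_add_add_comm]

/-- the quotient group -/
abbrev Wq := (con a).Quotient

/-- the class of a multiset -/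
def mk : Multiset (F × F) →+ Wq a := (con a).mk'

/-- the class of `[c,d]` -/
def sym (c d : F) : Wq a := mk a {(c, d)}

theorem mk_eq {s t : Multiset (F × F)} (h : G a (s + t)) : mk a s = mk a t :=
  (AddCon.eq (con a)).2 h

theorem mk_eq_zero {s : Multiset (F × F)} (h : mk a s = 0) : G a s := by
  have : mk a s = mk a 0 := by rw [h, map_zero]
  have := (AddCon.eq (con a)).1 this
  change G a (s + 0) at this
  rwa [add_zero] at this

theorem add_self (x : Wq a) : x + x = 0 := by
  induction x using AddCon.induction_on with
  | H s =>
    change mk a s + mk a s = 0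
    rw [← map_add, ← map_zero (mk a)]
    apply mk_eq
    rw [add_zero]
    exact G.of_N a (N.double s)

theorem eq_of_add {x y : Wq a} (h : x + y = 0) : x = y := by
  have : x + y + y = y := by rw [h, zero_add]
  rwa [add_assoc, add_self, add_zero] at this

theorem mk_eq_zero' {s : Multiset (F × F)} (h : N s) : mk a s = 0 := by
  rw [← map_zero (mk a)]
  apply mk_eq
  rw [add_zero]
  exact G.of_N a h

theorem sym_comm (c d : F) : sym a c d = sym a d c := by
  apply eq_of_add
  rw [sym, sym, ← map_add]
  apply mk_eq_zero'
  refine N.of_Z ![c, d] ![d, c] ![![0, 1], ![1, 0]] rfl ?_ ?_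
  · intro i j; fin_cases i <;> fin_cases j <;> rfl
  · intro i; fin_cases i <;> simp

theorem sym_add (c c' d : F) : sym a (c + c') d = sym a c d + sym a c' d := by
  apply eq_of_add
  rw [sym, sym, sym, ← map_add, ← map_add]
  apply mk_eq_zero'
  have h2 : (2 : F) = 0 := CharTwo.two_eq_zero
  refine N.of_Z ![c + c', c, c'] ![d, d, d] ![![c + c', c, c'], ![c, c, 0], ![c', 0, c']] rfl ?_ ?_
  · intro i j; fin_cases i <;> fin_cases j <;> rfl
  · intro i
    fin_cases i
    · simp [Fin.sum_univ_succ]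
      linear_combination (d * (c ^ 2 + c * c' + c' ^ 2)) * h2
    · simp [Fin.sum_univ_succ]
      linear_combination (d * c ^ 2) * h2
    · simp [Fin.sum_univ_succ]
      linear_combination (d * c' ^ 2) * h2

theorem sym_zero (d : F) : sym a 0 d = 0 := by
  have := sym_add a 0 0 d
  rwa [add_self, add_zero] at this

theorem sym_as (z d : F) : sym a (z ^ 2 * d) d = sym a z d := by
  apply eq_of_add
  rw [← sym_add, sym]
  apply mk_eq_zero'
  refine N.of_Z (fun _ : Unit => z ^ 2 * d + z) (fun _ => d) (fun _ _ => z) rfl (fun _ _ => rfl) ?_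
  intro i; simp; ring

theorem sym_sq (x c d : F) : sym a (x ^ 2 * c) d = sym a c (x ^ 2 * d) := by
  by_cases hx : x = 0
  · subst hx
    rw [sym_comm a c]
    simp [sym_zero]
  rw [sym_comm]
  apply eq_of_add
  rw [sym, sym, ← map_add]
  apply mk_eq_zero'
  refine N.of_Z ![d, c] ![x ^ 2 * c, x ^ 2 * d] ![![0, x⁻¹], ![x⁻¹, 0]] rfl ?_ ?_
  · intro i j; fin_cases i <;> fin_cases j <;> rfl
  · intro i; fin_cases i <;> simp <;> field_simp

theorem sym_gen (ha : ∀ i, a i ≠ 0) (i : Fin n) (c d : F) :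
    sym a (a i * c) d = sym a c (a i * d) := by
  apply mk_eq
  refine ⟨Pi.single i {(c, a i * d)}, ?_⟩
  have : T a (Pi.single i {(c, a i * d)}) = {(a i * c, d)} + {(c, a i * d)} := by
    rw [T, Finset.sum_eq_single i]
    · simp only [Pi.single_eq_same, Multiset.map_singleton, act]
      rw [mul_div_cancel_left₀ _ (ha i), add_comm]
    · intro j _ hj
      simp [hj]
    · simp
  rw [this]
  exact N.double _

/-- balanced elements -/
def Bal (y : F) : Prop := ∀ c d, sym a (y * c) d = sym a c (y * d)

theorem Bal.add {y z : F} (hy : Bal a y) (hz : Bal a z) : Bal a (y + z) := by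
  intro c d
  rw [add_mul, add_mul, sym_add, sym_comm a c, sym_add, hy, hz, sym_comm a c, sym_comm a c]

theorem Bal.mul {y z : F} (hy : Bal a y) (hz : Bal a z) : Bal a (y * z) := by
  intro c d
  rw [mul_assoc, hy, hz, ← mul_assoc, mul_comm z y]

theorem exists_bal {K : Type*} [Field K] [Algebra F K] (ha : ∀ i, a i ≠ 0)
    (x : Fin n → K) (hx : ∀ i, x i ^ 2 = algebraMap F K (a i))
    (hgen : Algebra.adjoin F (Set.range x) = ⊤) (z : K) :
    ∃ y, Bal a y ∧ algebraMap F K y = z ^ 2 := by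
  haveI : CharP K 2 := charP_of_injective_algebraMap (algebraMap F K).injective 2
  have hz : z ∈ Algebra.adjoin F (Set.range x) := by rw [hgen]; trivial
  induction hz using Algebra.adjoin_induction with
  | mem z hz =>
    obtain ⟨i, rfl⟩ := hz
    exact ⟨a i, sym_gen a ha i, (hx i).symm⟩
  | algebraMap r => exact ⟨r ^ 2, sym_sq a r, by simp⟩
  | add z w _ _ h1 h2 =>
    obtain ⟨y, hy, e⟩ := h1
    obtain ⟨y', hy', e'⟩ := h2
    exact ⟨y + y', hy.add a hy', by rw [map_add, e, e', CharTwo.add_sq]⟩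
  | mul z w _ _ h1 h2 =>
    obtain ⟨y, hy, e⟩ := h1
    obtain ⟨y', hy', e'⟩ := h2
    exact ⟨y * y', hy.mul a hy', by rw [map_mul, e, e', mul_pow]⟩

theorem sum_symm {A ι : Type*} [AddCommMonoid A] (h2 : ∀ x : A, x + x = 0) [Fintype ι]
    (f : ι → ι → A) (hf : ∀ i j, f i j = f j i) : ∑ i, ∑ j, f i j = ∑ i, f i i := by
  classical
  rw [← Finset.sum_product', ← Finset.sum_filter_add_sum_filter_not _ (fun q : ι × ι => q.1 = q.2)]
  have h0 : ∑ q ∈ (Finset.univ ×ˢ Finset.univ : Finset (ι × ι)) with ¬ q.1 = q.2, f q.1 q.2 = 0 := by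
    refine Finset.sum_involution (fun q _ => q.swap) ?_ ?_ ?_ ?_
    · rintro ⟨i, j⟩ _
      change f i j + f j i = 0
      rw [hf j i]; exact h2 _
    · rintro ⟨i, j⟩ hq _ he
      simp at hq he
      exact hq he.2
    · rintro ⟨i, j⟩ hq
      simp at hq ⊢
      exact fun h => hq h.symm
    · rintro ⟨i, j⟩ _; rfl
  rw [h0, add_zero]
  refine Finset.sum_nbij' (fun q => q.1) (fun i => (i, i)) ?_ ?_ ?_ ?_ ?_
  · simp
  · simp
  · rintro ⟨i, j⟩ h; simp at h; simp [h]
  · simp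
  · rintro ⟨i, j⟩ h; simp at h; simp [h]

theorem sym_finsum (a : Fin n → F) {ι : Type*} (s : Finset ι) (f : ι → F) (d : F) :
    sym a (∑ i ∈ s, f i) d = ∑ i ∈ s, sym a (f i) d := by
  classical
  induction s using Finset.induction_on with
  | empty => simp [sym_zero]
  | insert i s hi ih => rw [Finset.sum_insert hi, Finset.sum_insert hi, sym_add, ih]

theorem main_alg {K : Type*} [Field K] [Algebra F K] (ha : ∀ i, a i ≠ 0)
    (x : Fin n → K) (hx : ∀ i, x i ^ 2 = algebraMap F K (a i))
    (hgen : Algebra.adjoin F (Set.range x) = ⊤) {ι : Type*} [Fintype ι] (c d : ι → F)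
    (Z : ι → ι → K) (hZ : ∀ i j, Z i j = Z j i)
    (h : ∀ i, algebraMap F K (c i) = Z i i + ∑ j, algebraMap F K (d j) * Z i j ^ 2) :
    ∑ i, sym a (c i) (d i) = 0 := by
  choose y hyB hy using exists_bal a ha x hx hgen
  let z : ι → F := fun i => c i - ∑ j, y (Z i j) * d j
  have hc : ∀ i, c i = z i + ∑ j, y (Z i j) * d j := fun i => by simp [z]
  have hz : ∀ i, algebraMap F K (z i) = Z i i := by
    intro i
    simp only [z, map_sub, map_sum, map_mul, hy, h i]
    rw [add_sub_assoc, sub_eq_zero.2, add_zero]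
    exact Finset.sum_congr rfl fun j _ => mul_comm _ _
  have hyz : ∀ i, y (Z i i) = z i ^ 2 := by
    intro i
    apply (algebraMap F K).injective
    rw [hy, map_pow, hz]
  have e1 : ∀ i, sym a (c i) (d i) =
      sym a (z i) (d i) + ∑ j, sym a (y (Z i j) * d j) (d i) := by
    intro i
    conv_lhs => rw [hc i]
    rw [sym_add, sym_finsum]
  simp only [e1, Finset.sum_add_distrib]
  rw [sum_symm (add_self a) (fun i j => sym a (y (Z i j) * d j) (d i))]
  · simp only [hyz, sym_as]
    exact add_self a _
  · intro i j
    rw [hyB, sym_comm, hZ i j]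

theorem mk_map {ι : Type*} [Fintype ι] (p : ι → F × F) :
    mk a (Finset.univ.val.map p) = ∑ i, sym a (p i).1 (p i).2 := by
  simp only [sym, ← map_sum]
  congr 1
  change _ = (Finset.univ.val.map fun i => ({p i} : Multiset (F × F))).sum
  have := Multiset.sum_map_singleton (Finset.univ.val.map p)
  rw [Multiset.map_map] at this
  exact this.symm

/-- the algebraic heart -/
theorem main_G {K : Type*} [Field K] [Algebra F K] (ha : ∀ i, a i ≠ 0)
    (x : Fin n → K) (hx : ∀ i, x i ^ 2 = algebraMap F K (a i))
    (hgen : Algebra.adjoin F (Set.range x) = ⊤) {ι : Type*} [Fintype ι] (p : ι → F × F)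
    (h : Lag (Qp fun i => (algebraMap F K (p i).1, algebraMap F K (p i).2))) :
    G a (Finset.univ.val.map p) := by
  haveI : CharP K 2 := charP_of_injective_algebraMap (algebraMap F K).injective 2
  obtain ⟨p', Z, σ, hp', hZ, hq⟩ := exists_Z _ h
  have hp'' : ∀ i, p' i = (algebraMap F K (swp σ i (p i)).1, algebraMap F K (swp σ i (p i)).2) := by
    intro i
    rw [hp']
    simp only [swp]
    split_ifs <;> rfl
  apply mk_eq_zero
  rw [mk_map]
  rw [← main_alg a ha x hx hgen (fun i => (swp σ i (p i)).1) (fun i => (swp σ i (p i)).2) Z hZ]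
  · refine Finset.sum_congr rfl fun i _ => ?_
    simp only [swp]
    split_ifs
    · exact sym_comm _ _ _
    · rfl
  · intro i
    have := hq i
    simp only [hp''] at this
    exact this

end alg

end WK


namespace WK

open QuadraticMap

section interface

variable {F : Type*} [Field F]

/-- the quadratic map attached to a coefficient matrix -/
noncomputable def toQuad (q : QF F) : QuadraticForm F (Fin q.dim → F) :=
  LinearMap.BilinMap.toQuadraticMap (Matrix.toLinearMap₂' F q.c)

theorem toQuad_apply (q : QF F) (v : Fin q.dim → F) : toQuad q v = q.eval v := by
  simp only [toQuad, LinearMap.BilinMap.toQuadraticMap_apply, Matrix.toLinearMap₂'_apply, QF.eval,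
    smul_eq_mul]
  refine Finset.sum_congr rfl fun i _ => Finset.sum_congr rfl fun j _ => ?_
  ring

theorem eval_eq (q : QF F) (v : Fin q.dim → F) : q.eval v = v ⬝ᵥ q.c.mulVec v := by
  simp only [QF.eval, dotProduct, Matrix.mulVec, Finset.mul_sum]
  refine Finset.sum_congr rfl fun i _ => Finset.sum_congr rfl fun j _ => ?_
  ring

theorem toQuad_polar (q : QF F) (v w : Fin q.dim → F) :
    polar (toQuad q) v w = w ⬝ᵥ (q.c + q.c.transpose).mulVec v := by
  simp only [polar, toQuad_apply, eval_eq, Matrix.mulVec_add, dotProduct_add, add_dotProduct,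
    Matrix.add_mulVec]
  have : w ⬝ᵥ q.c.transpose.mulVec v = v ⬝ᵥ q.c.mulVec w := by
    rw [Matrix.mulVec_transpose, Matrix.dotProduct_mulVec, dotProduct_comm]
  rw [this]
  ring

theorem nons_iff (q : QF F) : q.Nonsingular ↔ Nons (toQuad q) := by
  unfold QF.Nonsingular Nons
  refine forall_congr' fun v => ?_
  simp only [toQuad_polar]
  refine imp_congr_left ⟨fun h y => by rw [h, dotProduct_zero], fun h => ?_⟩
  funext i
  have := h (Pi.single i 1)
  simpa using this

theorem iso_iff (q q' : QF F) : QF.Isometric q q' ↔ (toQuad q).Equivalent (toQuad q') := by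
  constructor
  · rintro ⟨e, he⟩
    exact ⟨⟨e, fun v => by
      change toQuad q' (e v) = _
      rw [toQuad_apply, toQuad_apply, he]⟩⟩
  · rintro ⟨e⟩
    refine ⟨e.toLinearEquiv, fun v => ?_⟩
    rw [← toQuad_apply, ← toQuad_apply]
    exact e.map_app v

theorem orthSum_equiv (q q' : QF F) :
    (toQuad (q.orthSum q')).Equivalent ((toQuad q).prod (toQuad q')) := by
  refine QuadraticMap.Equivalent.symm ⟨⟨(LinearEquiv.sumArrowLequivProdArrow (Fin q.dim) (Fin q'.dim) F F).symm ≪≫ₗ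
    LinearEquiv.funCongrLeft F F finSumFinEquiv.symm, ?_⟩⟩
  rintro ⟨v, w⟩
  change toQuad (q.orthSum q') (fun i => Sum.elim v w (finSumFinEquiv.symm i)) = _
  rw [toQuad_apply, prod_apply, toQuad_apply, toQuad_apply]
  have h : ∀ (g : Fin (q.dim + q'.dim) → F),
      ∑ i, g i = ∑ i, g (finSumFinEquiv (Sum.inl i)) + ∑ i, g (finSumFinEquiv (Sum.inr i)) := by
    intro g
    rw [← finSumFinEquiv.sum_comp, Fintype.sum_sum_type]
  unfold QF.eval
  refine (h _).trans ?_
  congr 1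
  · refine Finset.sum_congr rfl fun i _ => (h _).trans ?_
    simp [QF.orthSum]
  · refine Finset.sum_congr rfl fun i _ => (h _).trans ?_
    simp [QF.orthSum]

theorem bin_equiv (c d : F) : (toQuad (QF.bin c d)).Equivalent (binQ (c, d)) := by
  refine ⟨⟨LinearEquiv.finTwoArrow F F, ?_⟩⟩
  intro v
  change binQ (c, d) (v (0 : Fin 2), v (1 : Fin 2)) = _
  rw [toQuad_apply, binQ_apply]
  refine Eq.symm ((Fin.sum_univ_two (fun i : Fin 2 => ∑ j : Fin 2, _)).trans ?_)
  simp [QF.bin]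
  ring

/-- `q` is represented by the multiset `s` -/
def Rep (q : QF F) (s : Multiset (F × F)) : Prop := (toQuad q).Equivalent (QM s)

theorem prod_congr {V V' W W' : Type*} [AddCommGroup V] [Module F V] [AddCommGroup V'] [Module F V']
    [AddCommGroup W] [Module F W] [AddCommGroup W'] [Module F W']
    {A : QuadraticForm F V} {A' : QuadraticForm F V'} {B : QuadraticForm F W}
    {B' : QuadraticForm F W'} (h : A.Equivalent A') (h' : B.Equivalent B') :
    (A.prod B).Equivalent (A'.prod B') := by
  obtain ⟨e⟩ := h
  obtain ⟨e'⟩ := h'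
  exact ⟨IsometryEquiv.prod e e'⟩

theorem Rep.add {q q' : QF F} {s s' : Multiset (F × F)} (h : Rep q s) (h' : Rep q' s') :
    Rep (q.orthSum q') (s + s') :=
  ((orthSum_equiv q q').trans (prod_congr h h')).trans (QM_add s s').symm

theorem Rep.nil : Rep (QF.nil : QF F) 0 := by
  haveI : Subsingleton (Fin (QF.nil : QF F).dim → F) := by
    change Subsingleton (Fin 0 → F)
    infer_instance
  exact QM_zero_of_subsingleton _

theorem Rep.zeros : Rep (QF.zeros 0 : QF F) 0 := by
  haveI : Subsingleton (Fin (QF.zeros 0 : QF F).dim → F) := by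
    change Subsingleton (Fin 0 → F)
    infer_instance
  exact QM_zero_of_subsingleton _

theorem Rep.bin (p : F × F) : Rep (QF.bin p.1 p.2) {p} :=
  (bin_equiv p.1 p.2).trans (QM_singleton p)

theorem Rep.iso {q q' : QF F} {s : Multiset (F × F)} (h : Rep q s) (h' : Rep q' s) :
    QF.Isometric q q' := (iso_iff q q').2 (h.trans h'.symm)

theorem Rep.congr {q q' : QF F} {s : Multiset (F × F)} (h : Rep q s) (h' : QF.Isometric q' q) :
    Rep q' s := ((iso_iff q' q).1 h').trans h

theorem Rep.nons [CharP F 2] {q : QF F} {s : Multiset (F × F)} (h : Rep q s) : q.Nonsingular :=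
  (nons_iff q).2 (Nons.congr h.symm (QM_nons s))

theorem Rep.sum {ι : Type*} (l : List ι) (q : ι → QF F) (s : ι → Multiset (F × F))
    (h : ∀ i, Rep (q i) (s i)) : Rep (QF.sumList (l.map q)) (l.map s).sum := by
  induction l with
  | nil => exact Rep.nil
  | cons i l ih => exact (h i).add ih

theorem Rep.hyp (k : ℕ) : Rep (QF.hyp k : QF F) (Multiset.replicate k (0, 0)) := by
  induction k with
  | zero => exact Rep.nil
  | succ k ih =>
    have := (Rep.bin ((0 : F), (0 : F))).add ih
    rw [Multiset.singleton_add, ← Multiset.replicate_succ] at this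
    exact this

/-- a standard form with given multiset -/
noncomputable def ofM (s : Multiset (F × F)) : QF F :=
  QF.sumList (s.toList.map fun p => QF.bin p.1 p.2)

theorem Rep.ofM (s : Multiset (F × F)) : Rep (ofM s) s := by
  have := Rep.sum s.toList (fun p => QF.bin p.1 p.2) (fun p => {p}) Rep.bin
  have h2 : (s.toList.map fun p => ({p} : Multiset (F × F))).sum = s := by
    conv_rhs => rw [← Multiset.sum_map_singleton s, ← s.coe_toList]
    simp
  rwa [h2] at this

theorem exists_rep [CharP F 2] (q : QF F) (h : q.Nonsingular) : ∃ s, Rep q s :=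
  (exists_QM _ (toQuad q) ((nons_iff q).1 h) rfl).1

theorem Qp_act (a : F) (ha : a ≠ 0) {ι : Type*} [Fintype ι] (p : ι → F × F) :
    (a • Qp p).Equivalent (Qp fun i => act a (p i)) := by
  refine ⟨⟨LinearEquiv.piCongrRight fun _ : ι =>
    LinearEquiv.prodCongr (LinearEquiv.refl F F) (LinearEquiv.smulOfNeZero F F a ha), ?_⟩⟩
  intro v
  change Qp (fun i => act a (p i)) (fun i => ((v i).1, a • (v i).2)) = a * Qp p v
  rw [Qp_apply, Qp_apply, Finset.mul_sum]
  refine Finset.sum_congr rfl fun i _ => ?_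
  simp only [act, smul_eq_mul]
  field_simp

theorem Rep.smul {q : QF F} {s : Multiset (F × F)} (h : Rep q s) (a : F) (ha : a ≠ 0) :
    Rep (QF.smul a q) (s.map (act a)) := by
  have h1 : (a • QM s).Equivalent (QM (s.map (act a))) := by
    refine (Qp_act a ha _).trans (QM_of _ _ ?_)
    conv_rhs => rw [← map_get_toList s, Multiset.map_map]
    rfl
  refine QuadraticMap.Equivalent.trans ?_ h1
  obtain ⟨e⟩ := h
  refine ⟨⟨e.toLinearEquiv, ?_⟩⟩
  intro v
  have h2 : ∀ w : Fin q.dim → F, QM s (e w) = q.eval w := fun w => by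
    rw [e.map_app, toQuad_apply]
  refine (congrArg (a * ·) (h2 v)).trans ?_
  rw [toQuad_apply]
  unfold QF.eval
  simp only [Finset.mul_sum]
  refine Finset.sum_congr rfl fun i _ => Finset.sum_congr rfl fun j _ => ?_
  simp only [QF.smul, Matrix.smul_apply, smul_eq_mul]
  ring

theorem Qp_act_sq (x : F) (hx : x ≠ 0) {ι : Type*} [Fintype ι] (p : ι → F × F) :
    (Qp p).Equivalent (Qp fun i => act (x ^ 2) (p i)) := by
  refine ⟨⟨LinearEquiv.piCongrRight fun _ : ι =>
    LinearEquiv.prodCongr (LinearEquiv.smulOfNeZero F F x⁻¹ (inv_ne_zero hx))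
      (LinearEquiv.smulOfNeZero F F x hx), ?_⟩⟩
  intro v
  change Qp (fun i => act (x ^ 2) (p i)) (fun i => (x⁻¹ • (v i).1, x • (v i).2)) = Qp p v
  rw [Qp_apply, Qp_apply]
  refine Finset.sum_congr rfl fun i _ => ?_
  simp only [act, smul_eq_mul]
  field_simp

theorem N_act_sq [CharP F 2] (x : F) (hx : x ≠ 0) (s : Multiset (F × F)) :
    N (s + s.map (act (x ^ 2))) := by
  have h1 : (QM s).Equivalent (QM (s.map (act (x ^ 2)))) := by
    refine (Qp_act_sq x hx _).trans (QM_of _ _ ?_)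
    conv_rhs => rw [← map_get_toList s, Multiset.map_map]
    rfl
  refine Lag.congr ?_ (N.double s)
  exact (QM_add _ _).trans ((prod_congr (QuadraticMap.Equivalent.refl _) h1).trans (QM_add _ _).symm)

theorem N_T [CharP F 2] {n : ℕ} (a x : Fin n → F) (hx : ∀ i, x i ^ 2 = a i) (ha : ∀ i, a i ≠ 0)
    (τ : Fin n → Multiset (F × F)) : N (T a τ) := by
  unfold T
  refine Finset.sum_induction _ N (fun _ _ => N.add) N.zero ?_
  intro i _
  have hxi : x i ≠ 0 := by
    intro h
    apply ha i
    rw [← hx i, h]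
    simp
  rw [← hx i]
  exact N_act_sq _ hxi _

theorem Rep.T {n : ℕ} (a : Fin n → F) (ha : ∀ i, a i ≠ 0) (τ : Fin n → QF F)
    (t : Fin n → Multiset (F × F)) (h : ∀ i, Rep (τ i) (t i)) :
    Rep (QF.sumList (List.ofFn fun i => (τ i).orthSum (QF.smul (a i) (τ i)))) (T a t) := by
  have := Rep.sum (List.finRange n) (fun i => (τ i).orthSum (QF.smul (a i) (τ i)))
    (fun i => t i + (t i).map (act (a i))) (fun i => (h i).add ((h i).smul _ (ha i)))
  rw [← List.ofFn_eq_map, ← List.ofFn_eq_map, List.sum_ofFn] at this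
  exact this

theorem Rep.hyperbolic [CharP F 2] {q : QF F} {s : Multiset (F × F)} (h : Rep q s) (hs : N s) :
    QF.Hyperbolic q := by
  obtain ⟨k, hk⟩ := (exists_QM _ (toQuad q) ((nons_iff q).1 h.nons) rfl).2 (Lag.congr h.symm hs)
  exact ⟨k, Rep.iso hk (Rep.hyp k)⟩

theorem N_replicate [CharP F 2] (k : ℕ) : N (Multiset.replicate k ((0 : F), (0 : F))) := by
  refine N.of_Z (ι := Fin k) (fun _ => 0) (fun _ => 0) (fun _ _ => 0) ?_ ?_ ?_
  · simp
  · intro _ _; rfl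
  · simp

theorem N.of_hyperbolic [CharP F 2] {q : QF F} {s : Multiset (F × F)} (h : Rep q s)
    (hq : QF.Hyperbolic q) : N s := by
  obtain ⟨k, hk⟩ := hq
  exact Lag.congr (((Rep.hyp k).congr hk).symm.trans h) (N_replicate k)

theorem N.exists_replicate [CharP F 2] {s : Multiset (F × F)} (h : N s) :
    ∃ k, (QM s).Equivalent (QM (Multiset.replicate k ((0 : F), (0 : F)))) :=
  (exists_QM _ (QM s) (QM_nons s) rfl).2 h

/-! base change -/

variable {K : Type*} [Field K]

theorem quad_zero_iff [CharP F 2] {m : ℕ} (M : Matrix (Fin m) (Fin m) F) :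
    (∀ v, v ⬝ᵥ M.mulVec v = 0) ↔ (∀ i, M i i = 0) ∧ ∀ i j, M i j = M j i := by
  constructor
  · intro h
    have h1 : ∀ i, M i i = 0 := by
      intro i
      have := h (Pi.single i 1)
      simpa using this
    refine ⟨h1, fun i j => ?_⟩
    have := h (Pi.single i 1 + Pi.single j 1)
    simp [Matrix.mulVec_add, h1] at this
    exact (CharTwo.add_eq_zero.1 this).symm
  · rintro ⟨h1, h2⟩ v
    simp only [dotProduct, Matrix.mulVec, Finset.mul_sum]
    rw [sum_symm (CharTwo.add_self_eq_zero) (fun i j => v i * (M i j * v j))]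
    · simp [h1]
    · intro i j
      rw [h2 i j]
      ring

theorem iso_map [CharP F 2] [CharP K 2] (f : F →+* K) {A B : QF F} (h : QF.Isometric A B) :
    QF.Isometric (A.map f) (B.map f) := by
  obtain ⟨m, A⟩ := A
  obtain ⟨n, B⟩ := B
  obtain ⟨e, he⟩ := h
  change (Fin m → F) ≃ₗ[F] (Fin n → F) at e
  have he : ∀ v : Fin m → F, e v ⬝ᵥ B.mulVec (e v) = v ⬝ᵥ A.mulVec v := by
    intro v
    have := he v
    rw [eval_eq, eval_eq] at this
    exact this
  let P : Matrix (Fin n) (Fin m) F := LinearMap.toMatrix' e.toLinearMap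
  let P' : Matrix (Fin m) (Fin n) F := LinearMap.toMatrix' e.symm.toLinearMap
  have hPP' : P * P' = 1 := by
    rw [← LinearMap.toMatrix'_comp]
    simp
  have hP'P : P' * P = 1 := by
    rw [← LinearMap.toMatrix'_comp]
    simp
  have hP : ∀ v, e v = P.mulVec v := by
    intro v
    change _ = (LinearMap.toMatrix' e.toLinearMap).mulVec v
    rw [LinearMap.toMatrix'_mulVec]
    rfl
  let D : Matrix (Fin m) (Fin m) F := P.transpose * B * P + A
  have hD : ∀ v, v ⬝ᵥ D.mulVec v = 0 := by
    intro v
    change v ⬝ᵥ (P.transpose * B * P + A).mulVec v = 0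
    rw [Matrix.add_mulVec, dotProduct_add, ← he v, hP,
      ← Matrix.mulVec_mulVec, ← Matrix.mulVec_mulVec, Matrix.dotProduct_mulVec,
      Matrix.vecMul_transpose, CharTwo.add_self_eq_zero]
  have hD' : ∀ v, v ⬝ᵥ (D.map f).mulVec v = 0 := by
    rw [quad_zero_iff] at hD ⊢
    refine ⟨fun i => ?_, fun i j => ?_⟩
    · rw [Matrix.map_apply, hD.1, map_zero]
    · rw [Matrix.map_apply, Matrix.map_apply, hD.2]
  have h1 : P.map f * P'.map f = 1 := by
    rw [← Matrix.map_mul, hPP']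
    simp
  have h2 : P'.map f * P.map f = 1 := by
    rw [← Matrix.map_mul, hP'P]
    simp
  refine ⟨(Matrix.toLin'OfInv h2 h1 : (Fin m → K) ≃ₗ[K] (Fin n → K)), ?_⟩
  intro v
  rw [eval_eq, eval_eq]
  change Fin m → K at v
  change (P.map f).mulVec v ⬝ᵥ (B.map f).mulVec ((P.map f).mulVec v) = v ⬝ᵥ (A.map f).mulVec v
  have hc : D.map f = (P.map f).transpose * (B.map f) * (P.map f) + A.map f := by
    change (P.transpose * B * P + A).map f = _
    rw [Matrix.map_add _ (map_add f), Matrix.map_mul, Matrix.map_mul, Matrix.transpose_map]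
  have := hD' v
  rw [hc, Matrix.add_mulVec, dotProduct_add, ← Matrix.mulVec_mulVec, ← Matrix.mulVec_mulVec,
    Matrix.dotProduct_mulVec, Matrix.vecMul_transpose] at this
  exact CharTwo.add_eq_zero.1 this

theorem map_orthSum (f : F →+* K) (A B : QF F) :
    (A.orthSum B).map f = (A.map f).orthSum (B.map f) := by
  unfold QF.orthSum QF.map
  congr 1
  ext i j
  obtain ⟨i, rfl⟩ := finSumFinEquiv.surjective i
  obtain ⟨j, rfl⟩ := finSumFinEquiv.surjective j
  rcases i with i | i <;> rcases j with j | j <;> simp <;> rfl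

theorem map_bin (f : F →+* K) (c d : F) : (QF.bin c d).map f = QF.bin (f c) (f d) := by
  unfold QF.bin QF.map
  congr 1
  ext i j
  fin_cases i <;> fin_cases j <;> simp

theorem Rep.map_ofList (f : F →+* K) (l : List (F × F)) :
    Rep ((QF.sumList (l.map fun p => QF.bin p.1 p.2)).map f)
      ((l : Multiset (F × F)).map (Prod.map f f)) := by
  induction l with
  | nil =>
    haveI : Subsingleton (Fin ((QF.nil : QF F).map f).dim → K) := by
      change Subsingleton (Fin 0 → K)
      infer_instance
    exact QM_zero_of_subsingleton (toQuad ((QF.nil : QF F).map f))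
  | cons p l ih =>
    have h1 := (Rep.bin (Prod.map f f p)).add ih
    rw [← Multiset.cons_coe, Multiset.map_cons, ← Multiset.singleton_add]
    have h2 : (QF.sumList ((p :: l).map fun p => QF.bin p.1 p.2)).map f =
      (QF.bin (f p.1) (f p.2)).orthSum ((QF.sumList (l.map fun p => QF.bin p.1 p.2)).map f) := by
      rw [← map_bin, ← map_orthSum]
      rfl
    rw [h2]
    exact h1

theorem Rep.map [CharP F 2] [CharP K 2] (f : F →+* K) {q : QF F} {s : Multiset (F × F)}
    (h : Rep q s) : Rep (q.map f) (s.map (Prod.map f f)) := by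
  have h1 := Rep.map_ofList f s.toList
  rw [s.coe_toList] at h1
  exact h1.congr (iso_map f (h.iso (Rep.ofM s)))

theorem map_T (f : F →+* K) {n : ℕ} (a : Fin n → F) (t : Fin n → Multiset (F × F)) :
    (T a t).map (Prod.map f f) = T (fun i => f (a i)) (fun i => (t i).map (Prod.map f f)) := by
  unfold T
  have := map_sum (Multiset.mapAddMonoidHom (Prod.map f f))
    (fun i => t i + (t i).map (act (a i))) Finset.univ
  refine this.trans (Finset.sum_congr rfl fun i _ => ?_)
  simp only [Multiset.coe_mapAddMonoidHom, Multiset.map_add, Multiset.map_map]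
  congr 1
  refine Multiset.map_congr rfl fun p _ => ?_
  simp [act]

theorem toQuad_zeros_map (f : F →+* K) (l : ℕ) : toQuad ((QF.zeros l).map f) = 0 := by
  ext v
  rw [toQuad_apply]
  unfold QF.eval
  have : ∀ i j, ((QF.zeros l).map f).c i j = 0 := by
    intro i j
    change Fin l at i j
    change f (Matrix.diagonal (fun _ : Fin l => (0 : F)) i j) = 0
    rw [Matrix.diagonal_zero, Matrix.zero_apply, map_zero]
  simp [this]

end interface

end WK

open QF in
/-- Aravire–Laghribi, purely inseparable multiquadratic case.
Let `F` have characteristic 2 and `K = F(√a₁,…,√aₙ)` with `aᵢ ∈ F*`.  Then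
`W_q(K/F) = Σᵢ ⟨1,aᵢ⟩_b ⊗ W_q(F)`: a nonsingular quadratic form `q` over `F` becomes
hyperbolic over `K` iff `q` is Witt equivalent to `⊥ᵢ (⟨1,aᵢ⟩_b ⊗ τᵢ)` for suitable
nonsingular forms `τᵢ` over `F`. -/
theorem wittKernel_multiquadratic
    (F K : Type*) [Field F] [Field K] [Algebra F K] [CharP F 2]
    (n : ℕ) (a : Fin n → F) (ha : ∀ i, a i ≠ 0)
    (x : Fin n → K) (hx : ∀ i, x i ^ 2 = algebraMap F K (a i))
    (hgen : Algebra.adjoin F (Set.range x) = ⊤) :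
    ∀ q : QF F, q.Nonsingular →
      (Hyperbolic (q.map (algebraMap F K)) ↔
        ∃ τ : Fin n → QF F, (∀ i, (τ i).Nonsingular) ∧
          WittEquiv q (sumList (List.ofFn fun i => (τ i).orthSum (smul (a i) (τ i))))) := by
  intro q hq
  haveI : CharP K 2 := charP_of_injective_algebraMap (algebraMap F K).injective 2
  obtain ⟨s, hs⟩ := WK.exists_rep q hq
  have hsK := hs.map (algebraMap F K)
  constructor
  · intro hyp
    have hN := WK.N.of_hyperbolic hsK hyp
    have hG := WK.main_G a ha x hx hgen (fun i => s.toList.get i)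
      (WK.Lag.congr (WK.QM_of _ _ (by
        conv_rhs => rw [← WK.map_get_toList s, Multiset.map_map]
        rfl)).symm hN)
    rw [WK.map_get_toList] at hG
    obtain ⟨t, ht⟩ := hG
    refine ⟨fun i => WK.ofM (t i), fun i => (WK.Rep.ofM (t i)).nons, ?_⟩
    have hρ := WK.Rep.T a ha (fun i => WK.ofM (t i)) t (fun i => WK.Rep.ofM (t i))
    obtain ⟨k, hk⟩ := WK.N.exists_replicate (WK.N.double (WK.T a t))
    obtain ⟨k', hk'⟩ := WK.N.exists_replicate ht
    refine ⟨k, k', 0, 0, ?_⟩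
    have h1 := hs.add ((WK.Rep.hyp k).add WK.Rep.zeros)
    have h2 := hρ.add ((WK.Rep.hyp k').add WK.Rep.zeros)
    rw [add_zero] at h1 h2
    refine h1.iso (h2.trans ?_)
    have e1 := ((WK.QM_add s _).trans
      (WK.prod_congr (QuadraticMap.Equivalent.refl _) hk)).trans (WK.QM_add _ _).symm
    have e2 := ((WK.QM_add (WK.T a t) _).trans
      (WK.prod_congr (QuadraticMap.Equivalent.refl _) hk')).trans (WK.QM_add _ _).symm
    have e3 : WK.T a t + (s + WK.T a t) = s + (WK.T a t + WK.T a t) := by abel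
    rw [e3] at e2
    exact e2.symm.trans e1
  · rintro ⟨τ, hτ, k, k', l, l', h⟩
    choose t ht using fun i => WK.exists_rep (τ i) (hτ i)
    have hρ := WK.Rep.T a ha τ t ht
    have hρK := hρ.map (algebraMap F K)
    rw [WK.map_T] at hρK
    have hNT := WK.N_T (fun i => algebraMap F K (a i)) x hx
      (fun i => by simpa using ha i) (fun i => (t i).map (Prod.map (algebraMap F K) (algebraMap F K)))
    have hh : ∀ k, ((Multiset.replicate k ((0 : F), (0 : F))).map
        (Prod.map (algebraMap F K) (algebraMap F K))) = Multiset.replicate k ((0 : K), (0 : K)) := by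
      intro k
      simp
    have hhyp := fun k => (WK.Rep.hyp (F := F) k).map (algebraMap F K)
    simp only [hh] at hhyp
    have h' := WK.iso_map (algebraMap F K) h
    simp only [WK.map_orthSum] at h'
    rw [WK.iso_iff] at h'
    have hdec : ∀ (A : QF K) (u : Multiset (K × K)) (k l : ℕ), WK.Rep A u →
        (WK.toQuad (A.orthSum (((hyp k : QF F).map (algebraMap F K)).orthSum
          ((zeros l : QF F).map (algebraMap F K))))).Equivalent
        ((WK.QM (u + Multiset.replicate k (0, 0))).prod
          (0 : QuadraticForm K (Fin ((zeros l : QF F).map (algebraMap F K)).dim → K))) := by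
      intro A u k l hA
      rw [← WK.toQuad_zeros_map]
      have c1 := (WK.orthSum_equiv ((hyp k : QF F).map (algebraMap F K))
        ((zeros l : QF F).map (algebraMap F K))).trans
          (WK.prod_congr (hhyp k) (QuadraticMap.Equivalent.refl _))
      have c2 := (WK.orthSum_equiv A _).trans (WK.prod_congr hA c1)
      refine c2.trans ?_
      exact (WK.Equivalent.prodAssoc _ _ _).symm.trans
        (WK.prod_congr (WK.QM_add _ _).symm (QuadraticMap.Equivalent.refl _))
    have e := ((hdec _ _ k l hsK).symm.trans h').trans (hdec _ _ k' l' hρK)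
    have hR := WK.Lag.prod (hNT.add (WK.N_replicate k'))
      (WK.Lag.zero (F := K) (V := Fin ((zeros l' : QF F).map (algebraMap F K)).dim → K))
    have hL := WK.Lag.of_prod_zero (WK.Lag.congr e.symm hR)
    exact hsK.hyperbolic (WK.N.cancel hL (WK.N_replicate k))
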